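/- For every real number x with x ≤ 1.79, exp(x) ≤ 1 + x + x². -/

import Mathlib

/-!
If `f' ≤ f`, then `f x * exp (-x)` is decreasing, so the inequality `exp ≤ f` propagates to the
left. For `f x = 1 + x + x ^ 2` one has `f x - f' x = x * (x - 1)`, which is nonnegative outside
`(0, 1)`. Hence the inequality propagates from `0` to all of `(-∞, 0]`, holds on `[0, 1]` by the
Taylor estimate for `exp`, and propagates from any point `b ≥ 1` at which it holds to `[1, b]`.
The constant `1.79` is a rounding down of the positive solution of `exp b = 1 + b + b ^ 2`.
-/

open Set

theorem antitoneOn_mul_exp_neg_of_deriv_le_self {s : Set ℝ} {f f' : ℝ → ℝ} (hs : Convex ℝ s)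
    (hf : ContinuousOn f s) (hf' : ∀ x ∈ interior s, HasDerivAt f (f' x) x)
    (hle : ∀ x ∈ interior s, f' x ≤ f x) :
    AntitoneOn (fun x ↦ f x * Real.exp (-x)) s := by
  have hderiv : ∀ x ∈ interior s,
      HasDerivAt (fun x ↦ f x * Real.exp (-x)) ((f' x - f x) * Real.exp (-x)) x := fun x hx ↦
    ((hf' x hx).mul (hasDerivAt_neg x).exp).congr_deriv (by ring)
  exact antitoneOn_of_hasDerivWithinAt_nonpos hs (by fun_prop)
    (fun x hx ↦ (hderiv x hx).hasDerivWithinAt)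
    (fun x hx ↦ mul_nonpos_of_nonpos_of_nonneg (sub_nonpos.2 (hle x hx)) (Real.exp_pos _).le)

theorem exp_le_of_exp_le_of_deriv_le_self {f f' : ℝ → ℝ} {a b : ℝ} (hab : a ≤ b)
    (hf : ContinuousOn f (Icc a b)) (hf' : ∀ x ∈ Ioo a b, HasDerivAt f (f' x) x)
    (hle : ∀ x ∈ Ioo a b, f' x ≤ f x) (hb : Real.exp b ≤ f b) :
    Real.exp a ≤ f a := by
  have exp_le_iff (x : ℝ) : Real.exp x ≤ f x ↔ 1 ≤ f x * Real.exp (-x) := by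
    rw [Real.exp_neg, ← div_eq_mul_inv, one_le_div (Real.exp_pos x)]
  rw [← interior_Icc] at hf' hle
  rw [exp_le_iff] at hb ⊢
  exact hb.trans <| antitoneOn_mul_exp_neg_of_deriv_le_self (convex_Icc a b) hf hf' hle
    (left_mem_Icc.2 hab) (right_mem_Icc.2 hab) hab

theorem exp_le_one_add_add_sq_of_le_of_nonpos_or_one_le {a b : ℝ} (hab : a ≤ b)
    (h : b ≤ 0 ∨ 1 ≤ a) (hb : Real.exp b ≤ 1 + b + b ^ 2) :
    Real.exp a ≤ 1 + a + a ^ 2 := by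
  have hderiv (x : ℝ) : HasDerivAt (fun x : ℝ ↦ 1 + x + x ^ 2) (1 + 2 * x) x :=
    (((hasDerivAt_id x).const_add 1).add (hasDerivAt_pow 2 x)).congr_deriv (by norm_num)
  refine exp_le_of_exp_le_of_deriv_le_self (f := fun x ↦ 1 + x + x ^ 2) hab (by fun_prop)
    (fun x _ ↦ hderiv x) (fun x hx ↦ ?_) hb
  have hx_mul : 0 ≤ x * (x - 1) := by
    rcases h with hb_nonpos | ha_one
    · exact mul_nonneg_of_nonpos_of_nonpos (by linarith [hx.2]) (by linarith [hx.2])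
    · exact mul_nonneg (by linarith [hx.1]) (by linarith [hx.1])
  linarith

theorem exp_le_one_add_add_sq_of_le_one {x : ℝ} (hx : x ≤ 1) :
    Real.exp x ≤ 1 + x + x ^ 2 := by
  rcases le_total x 0 with hx_nonpos | hx_nonneg
  · exact exp_le_one_add_add_sq_of_le_of_nonpos_or_one_le hx_nonpos (.inl le_rfl) (by simp)
  · have hx_abs : |x| ≤ 1 := by rwa [abs_of_nonneg hx_nonneg]
    linarith [le_of_abs_le (Real.abs_exp_sub_one_sub_id_le hx_abs)]

theorem isLowerSet_setOf_exp_le_one_add_add_sq :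
    IsLowerSet {x : ℝ | Real.exp x ≤ 1 + x + x ^ 2} := by
  intro b a hab hb
  rcases le_total a 1 with ha | ha
  · exact exp_le_one_add_add_sq_of_le_one ha
  · exact exp_le_one_add_add_sq_of_le_of_nonpos_or_one_le hab (.inr ha) hb

theorem exp_0_79_le : Real.exp 0.79 ≤ 2.205 := by
  have htaylor := Real.exp_bound' (x := 0.79) (n := 8) (by norm_num) (by norm_num) (by norm_num)
  exact htaylor.trans (by norm_num [Finset.sum_range_succ, Nat.factorial])

theorem exp_1_79_le : Real.exp 1.79 ≤ 1 + 1.79 + 1.79 ^ 2 :=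
  calc Real.exp 1.79 = Real.exp 1 * Real.exp 0.79 := by rw [← Real.exp_add]; norm_num
    _ ≤ 2.7182818286 * 2.205 := by
      gcongr
      · exact Real.exp_one_lt_d9.le
      · exact exp_0_79_le
    _ ≤ 1 + 1.79 + 1.79 ^ 2 := by norm_num

/-- For every real `x ≤ 1.79`, `exp x ≤ 1 + x + x²`. -/
theorem exp_le_one_add_add_sq (x : ℝ) (hx : x ≤ 1.79) :
    Real.exp x ≤ 1 + x + x ^ 2 :=
  isLowerSet_setOf_exp_le_one_add_add_sq hx exp_1_79_le
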